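/- For all positive integers m, n and every m-homogeneous polynomial P(z) = ∑_{|α|=m} a_α z^α on ℂ^n, one has (∑_{|α|=m} |a_α|²)^{1/2} = ‖P‖_{L²(μⁿ)} ≤ (√2)^m · ‖P‖_{L¹(μⁿ)}, i.e. (∫_{𝕋^n} |P(z)|² dμⁿ(z))^{1/2} ≤ (√2)^m · ∫_{𝕋^n} |P(z)| dμⁿ(z). (Hypercontractive L¹–L² inequality for m-homogeneous polynomials on the n-torus.) -/

import Mathlib

open Finset MeasureTheory

/-- Evaluation of the `m`-homogeneous polynomial on `ℂ^n` with coefficient family `a`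
(indexed by the multi-indices `α` with `|α| = m`) at the point `z`. -/
noncomputable def mhEval (n m : ℕ) (a : (Fin n → ℕ) → ℂ) (z : Fin n → ℂ) : ℂ :=
  ∑ α ∈ Finset.Nat.antidiagonalTuple n m, a α * ∏ i, z i ^ α i

/-- The parametrization `θ ↦ (e^{2πiθ_1}, …, e^{2πiθ_n})` of the `n`-torus; the normalized
Haar measure `μⁿ` on `𝕋^n` is the image of Lebesgue measure on `(0,1]^n` under this map. -/
noncomputable def torusParam (n : ℕ) (θ : Fin n → ℝ) : Fin n → ℂ :=
  fun j => Complex.exp (2 * Real.pi * Complex.I * θ j)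

/-! On the circle a polynomial `f` factors as `f = g h` with `g`, `h` in the disc algebra and
`|g| = |h| = |f|^{1/2}`: a linear factor whose zero lies outside the open disc is the square of a
holomorphic function, and a zero inside is first traded for a Blaschke factor, of modulus one. The
`k`-th coefficient of `f` is a sum of `k + 1` products of coefficients of `g` and `h`, so
Cauchy–Schwarz and Bessel give Carleman's inequality `∑ |c_k|² / (k + 1) ≤ ‖f‖₁²`. Its constant is
`1`, so Minkowski's inequality carries it over to the torus, with weights `∏ 1 / (α_i + 1)`;
finally `∏ (α_i + 1) ≤ 2 ^ ∑ α_i`. -/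

open Metric Real
open scoped ComplexConjugate Nat Polynomial

/-- The `k`-th Taylor coefficient at the origin, read off from the iterated derivative (so it is
only meaningful for functions analytic at `0`). -/
noncomputable def taylorCoeff (f : ℂ → ℂ) (k : ℕ) : ℂ :=
  iteratedDeriv k f 0 / k !

theorem taylorCoeff_polynomial_eval (p : ℂ[X]) (k : ℕ) :
    taylorCoeff (fun z => p.eval z) k = p.coeff k := by
  have iteratedDeriv_eval : ∀ k, iteratedDeriv k (fun z => p.eval z) =
      fun z => (Polynomial.derivative^[k] p).eval z := by
    intro k
    induction k with
    | zero => simp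
    | succ k ih =>
      ext z
      rw [iteratedDeriv_succ, ih, Polynomial.deriv, Function.iterate_succ_apply']
  simp only [taylorCoeff, iteratedDeriv_eval]
  rw [← Polynomial.coeff_zero_eq_eval_zero,
    Polynomial.coeff_iterate_derivative, zero_add, Nat.descFactorial_self, nsmul_eq_mul,
    mul_div_cancel_left₀ _ (Nat.cast_ne_zero.mpr k.factorial_ne_zero)]

theorem taylorCoeff_mul {g h : ℂ → ℂ} (hg : AnalyticAt ℂ g 0) (hh : AnalyticAt ℂ h 0) (k : ℕ) :
    taylorCoeff (fun z => g z * h z) k =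
      ∑ p ∈ antidiagonal k, taylorCoeff g p.1 * taylorCoeff h p.2 := by
  rw [taylorCoeff, iteratedDeriv_fun_mul hg.contDiffAt hh.contDiffAt, Finset.sum_div,
    Finset.Nat.sum_antidiagonal_eq_sum_range_succ
      (fun i j => taylorCoeff g i * taylorCoeff h j)]
  refine Finset.sum_congr rfl fun i hi => ?_
  rw [Nat.cast_choose ℂ (mem_range_succ_iff.mp hi), taylorCoeff, taylorCoeff]
  have := Nat.cast_ne_zero (R := ℂ).mpr k.factorial_ne_zero
  field_simp

theorem circleAverage_inv_pow_mul_eq_taylorCoeff {f : ℂ → ℂ} (hf : DiffContOnCl ℂ f (ball 0 1))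
    (k : ℕ) : circleAverage (fun z => z⁻¹ ^ k * f z) 0 1 = taylorCoeff f k := by
  have cauchy := hf.circleIntegral_one_div_sub_center_pow_smul one_pos k
  simp only [sub_zero, one_div, smul_eq_mul] at cauchy
  have integrand : ∀ z : ℂ, (z - 0)⁻¹ • (z⁻¹ ^ k * f z) = (z ^ (k + 1))⁻¹ * f z := fun z => by
    rw [sub_zero, smul_eq_mul, pow_succ, mul_inv, inv_pow]; ring
  simp_rw [circleAverage_eq_circleIntegral one_ne_zero, integrand, cauchy, smul_eq_mul,
    taylorCoeff]
  field_simp [Complex.two_pi_I_ne_zero]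

theorem hasSum_norm_sq_circleAverage_inv_zpow_mul {f : ℂ → ℂ} (hf : ContinuousOn f (sphere 0 1)) :
    HasSum (fun k : ℤ => ‖circleAverage (fun z => z⁻¹ ^ k * f z) 0 1‖ ^ 2)
      (circleAverage (fun z => ‖f z‖ ^ 2) 0 1) := by
  have hcont : Continuous fun t => f (circleMap 0 1 t) :=
    hf.comp_continuous (continuous_circleMap 0 1) (circleMap_mem_sphere 0 zero_le_one)
  obtain ⟨C, hC⟩ := (isCompact_sphere (0 : ℂ) 1).exists_bound_of_continuousOn hf
  have hbound (t : ℝ) : ‖f (circleMap 0 1 t)‖ ≤ C := hC _ (circleMap_mem_sphere 0 zero_le_one t)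
  have hL2 : MemLp (fun t => f (circleMap 0 1 t)) 2 (volume.restrict (Set.Ioc 0 (2 * π))) :=
    .of_bound hcont.aestronglyMeasurable C (.of_forall hbound)
  convert hasSum_sq_fourierCoeffOn two_pi_pos hL2 using 4 with k
  · simp only [fourierCoeffOn_eq_integral, circleAverage_def, sub_zero, one_div]
    congr 2
    ext t
    rw [fourier_coe_apply, smul_eq_mul, circleMap_zero, Complex.ofReal_one, one_mul,
      ← Complex.exp_neg, ← Complex.exp_int_mul]
    congr 2
    push_cast
    field_simp [Real.pi_ne_zero]
    ring
  · simp [circleAverage_def]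

theorem summable_norm_sq_taylorCoeff {f : ℂ → ℂ} (hf : DiffContOnCl ℂ f (ball 0 1)) :
    Summable fun k => ‖taylorCoeff f k‖ ^ 2 := by
  have hcont : ContinuousOn f (sphere 0 1) := hf.continuousOn_ball.mono sphere_subset_closedBall
  simpa [Function.comp_def, ← circleAverage_inv_pow_mul_eq_taylorCoeff hf] using
    (hasSum_norm_sq_circleAverage_inv_zpow_mul hcont).summable.comp_injective Nat.cast_injective

theorem tsum_norm_sq_taylorCoeff_le {f : ℂ → ℂ} (hf : DiffContOnCl ℂ f (ball 0 1)) :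
    ∑' k, ‖taylorCoeff f k‖ ^ 2 ≤ circleAverage (fun z => ‖f z‖ ^ 2) 0 1 := by
  have hcont : ContinuousOn f (sphere 0 1) := hf.continuousOn_ball.mono sphere_subset_closedBall
  have parseval := hasSum_norm_sq_circleAverage_inv_zpow_mul hcont
  rw [← parseval.tsum_eq]
  refine (summable_norm_sq_taylorCoeff hf).tsum_le_tsum_of_inj (fun k : ℕ => (k : ℤ))
    Nat.cast_injective (fun _ _ => by positivity) (fun k => ?_) parseval.summable
  simp [← circleAverage_inv_pow_mul_eq_taylorCoeff hf]

theorem norm_sum_antidiagonal_sq_div_le {E : Type*} [SeminormedAddCommGroup E] (x : ℕ × ℕ → E)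
    (k : ℕ) :
    ‖∑ p ∈ antidiagonal k, x p‖ ^ 2 / (k + 1) ≤ ∑ p ∈ antidiagonal k, ‖x p‖ ^ 2 := by
  rw [div_le_iff₀' (by positivity)]
  calc ‖∑ p ∈ antidiagonal k, x p‖ ^ 2 ≤ (∑ p ∈ antidiagonal k, ‖x p‖) ^ 2 := by
        gcongr; exact norm_sum_le _ _
    _ ≤ (k + 1) * ∑ p ∈ antidiagonal k, ‖x p‖ ^ 2 := by
        simpa using sq_sum_le_card_mul_sum_sq (s := antidiagonal k) (f := fun p => ‖x p‖)

theorem sum_sum_antidiagonal_mul_le_tsum_mul_tsum {u v : ℕ → ℝ} (hu : Summable u) (hv : Summable v)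
    (hu₀ : 0 ≤ u) (hv₀ : 0 ≤ v) (s : Finset ℕ) :
    ∑ k ∈ s, ∑ p ∈ antidiagonal k, u p.1 * v p.2 ≤ (∑' k, u k) * ∑' k, v k := by
  rw [tsum_mul_tsum_eq_tsum_sum_antidiagonal_of_summable_norm hu.norm hv.norm]
  refine (summable_norm_sum_mul_antidiagonal_of_summable_norm hu.norm hv.norm).of_norm.sum_le_tsum s
    fun k _ => Finset.sum_nonneg fun p _ => mul_nonneg (hu₀ _) (hv₀ _)

theorem diffContOnCl_sqrt_one_sub_mul {u : ℂ} (hu : ‖u‖ ≤ 1) :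
    DiffContOnCl ℂ (fun z => Complex.sqrt (1 - u * z)) (ball 0 1) := by
  have re_le (z : ℂ) : (u * z).re ≤ ‖z‖ := by
    refine (Complex.re_le_norm _).trans ?_
    rw [norm_mul]
    exact mul_le_of_le_one_left (norm_nonneg z) hu
  refine .mk_ball (fun z hz => ?_) fun z hz => ?_
  · have hz_slit : 1 - u * z ∈ Complex.slitPlane :=
      .inl <| sub_pos.mpr <| (re_le z).trans_lt (mem_ball_zero_iff.mp hz)
    exact ((Complex.differentiableAt_sqrt hz_slit).comp z
      (f := fun z => 1 - u * z) (by fun_prop)).differentiableWithinAt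
  · have hz_re : 0 ≤ (1 - u * z).re :=
      sub_nonneg.mpr <| (re_le z).trans (mem_closedBall_zero_iff.mp hz)
    exact (ContinuousAt.comp (f := fun z => 1 - u * z) (Complex.continuousAt_sqrt (.inl hz_re))
      (by fun_prop)).continuousWithinAt

theorem norm_sub_eq_norm_one_sub_conj_mul (w : ℂ) {z : ℂ} (hz : ‖z‖ = 1) :
    ‖z - w‖ = ‖1 - conj w * z‖ := by
  have hz_conj : z * conj z = 1 := by simp [Complex.mul_conj', hz]
  have : 1 - conj w * z = z * conj (z - w) := by rw [map_sub, mul_sub, hz_conj, mul_comm]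
  rw [this, norm_mul, hz, one_mul, RCLike.norm_conj]

theorem one_sub_mul_ne_zero {u z : ℂ} (hu : ‖u‖ < 1) (hz : ‖z‖ ≤ 1) : 1 - u * z ≠ 0 := by
  intro h
  have : ‖u * z‖ < 1 := by
    rw [norm_mul]
    exact mul_lt_one_of_nonneg_of_lt_one_left (norm_nonneg u) hu hz
  rw [← sub_eq_zero.mp h, norm_one] at this
  exact this.false

/-- A factorization on the unit circle of `f` into two functions of the disc algebra with equal
moduli there, so that each factor has modulus `|f|^{1/2}`: the substitute for a holomorphic square
root of `f` in the presence of zeros. -/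
def HasBalancedFactorization (f : ℂ → ℂ) : Prop :=
  ∃ g h : ℂ → ℂ, DiffContOnCl ℂ g (ball 0 1) ∧ DiffContOnCl ℂ h (ball 0 1) ∧
    ∀ z ∈ sphere (0 : ℂ) 1, f z = g z * h z ∧ ‖g z‖ = ‖h z‖

namespace HasBalancedFactorization

theorem congr {f₁ f₂ : ℂ → ℂ} (h : HasBalancedFactorization f₁)
    (heq : Set.EqOn f₁ f₂ (sphere 0 1)) : HasBalancedFactorization f₂ := by
  obtain ⟨g, k, hg, hk, hf⟩ := h
  exact ⟨g, k, hg, hk, fun z hz => ⟨(heq hz).symm.trans (hf z hz).1, (hf z hz).2⟩⟩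

theorem mul {f₁ f₂ : ℂ → ℂ} (h₁ : HasBalancedFactorization f₁) (h₂ : HasBalancedFactorization f₂) :
    HasBalancedFactorization fun z => f₁ z * f₂ z := by
  obtain ⟨g₁, k₁, hg₁, hk₁, hf₁⟩ := h₁
  obtain ⟨g₂, k₂, hg₂, hk₂, hf₂⟩ := h₂
  refine ⟨fun z => g₁ z * g₂ z, fun z => k₁ z * k₂ z, hg₁.smul hg₂, hk₁.smul hk₂,
    fun z hz => ⟨?_, ?_⟩⟩
  · simp only [(hf₁ z hz).1, (hf₂ z hz).1, mul_mul_mul_comm]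
  · rw [norm_mul, norm_mul, (hf₁ z hz).2, (hf₂ z hz).2]

theorem sq {g : ℂ → ℂ} (hg : DiffContOnCl ℂ g (ball 0 1)) :
    HasBalancedFactorization fun z => g z ^ 2 :=
  ⟨g, g, hg, hg, fun z _ => ⟨pow_two (g z), rfl⟩⟩

theorem of_norm_eq_one {b : ℂ → ℂ} (hb : DiffContOnCl ℂ b (ball 0 1))
    (h : ∀ z ∈ sphere (0 : ℂ) 1, ‖b z‖ = 1) : HasBalancedFactorization b :=
  ⟨b, fun _ => 1, hb, diffContOnCl_const, fun z hz => ⟨(mul_one _).symm, by rw [h z hz, norm_one]⟩⟩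

theorem const (c : ℂ) : HasBalancedFactorization fun _ => c := by
  simpa [Complex.sqrt] using sq (g := fun _ => c.sqrt) diffContOnCl_const

theorem one_sub_mul {u : ℂ} (hu : ‖u‖ ≤ 1) : HasBalancedFactorization fun z => 1 - u * z := by
  simpa [Complex.sqrt] using sq (diffContOnCl_sqrt_one_sub_mul hu)

theorem blaschke {w : ℂ} (hw : ‖w‖ < 1) :
    HasBalancedFactorization fun z => (z - w) / (1 - conj w * z) := by
  have hne : ∀ z ∈ closedBall (0 : ℂ) 1, 1 - conj w * z ≠ 0 := fun z hz =>
    one_sub_mul_ne_zero ((RCLike.norm_conj w).trans_lt hw) (mem_closedBall_zero_iff.mp hz)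
  refine of_norm_eq_one (DifferentiableOn.diffContOnCl ?_) fun z hz => ?_
  · rw [closure_ball _ one_ne_zero]
    exact DifferentiableOn.div (by fun_prop) (by fun_prop) hne
  · rw [norm_div, norm_sub_eq_norm_one_sub_conj_mul w (mem_sphere_zero_iff_norm.mp hz),
      div_self (norm_ne_zero_iff.mpr (hne z (sphere_subset_closedBall hz)))]

theorem sub_const (w : ℂ) : HasBalancedFactorization fun z => z - w := by
  rcases lt_or_ge ‖w‖ 1 with hw | hw
  · have hw_conj : ‖conj w‖ < 1 := (RCLike.norm_conj w).trans_lt hw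
    refine ((blaschke hw).mul (one_sub_mul hw_conj.le)).congr fun z hz => ?_
    exact div_mul_cancel₀ _ (one_sub_mul_ne_zero hw_conj (mem_sphere_zero_iff_norm.mp hz).le)
  · have hw₀ : w ≠ 0 := norm_pos_iff.mp (one_pos.trans_le hw)
    have hw_inv : ‖w⁻¹‖ ≤ 1 := by rw [norm_inv]; exact inv_le_one_of_one_le₀ hw
    refine ((const (-w)).mul (one_sub_mul hw_inv)).congr fun z _ => ?_
    field_simp
    ring

theorem polynomial_eval (p : ℂ[X]) : HasBalancedFactorization fun z => p.eval z := by
  have prod_sub (s : Multiset ℂ) :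
      HasBalancedFactorization fun z => (s.map (fun w => z - w)).prod := by
    induction s using Multiset.induction with
    | empty => simpa using const 1
    | cons w s ih => simpa using (sub_const w).mul ih
  simp_rw [(IsAlgClosed.splits p).eval_eq_prod_roots]
  exact (const _).mul (prod_sub _)

end HasBalancedFactorization

theorem sum_norm_sq_taylorCoeff_div_le_circleAverage_norm_sq {f : ℂ → ℂ}
    (hf : DiffContOnCl ℂ f (ball 0 1)) (hfac : HasBalancedFactorization f) (s : Finset ℕ) :
    ∑ k ∈ s, ‖taylorCoeff f k‖ ^ 2 / (k + 1) ≤ circleAverage (fun z => ‖f z‖) 0 1 ^ 2 := by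
  obtain ⟨g, h, hg, hh, hgh⟩ := hfac
  have analyticAt_zero {k : ℂ → ℂ} (hk : DiffContOnCl ℂ k (ball 0 1)) : AnalyticAt ℂ k 0 :=
    hk.differentiableOn.analyticAt (ball_mem_nhds 0 one_pos)
  have hgh_dcc : DiffContOnCl ℂ (fun z => g z * h z) (ball 0 1) := hg.smul hh
  have taylorCoeff_eq (k : ℕ) :
      taylorCoeff f k = ∑ p ∈ antidiagonal k, taylorCoeff g p.1 * taylorCoeff h p.2 := by
    rw [← taylorCoeff_mul (analyticAt_zero hg) (analyticAt_zero hh),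
      ← circleAverage_inv_pow_mul_eq_taylorCoeff hf,
      ← circleAverage_inv_pow_mul_eq_taylorCoeff hgh_dcc]
    refine circleAverage_congr_sphere fun z hz => ?_
    rw [abs_one] at hz
    simp only [(hgh z hz).1]
  have tsum_le {k : ℂ → ℂ} (hk : DiffContOnCl ℂ k (ball 0 1))
      (hkf : ∀ z ∈ sphere (0 : ℂ) 1, ‖k z‖ ^ 2 = ‖f z‖) :
      ∑' i, ‖taylorCoeff k i‖ ^ 2 ≤ circleAverage (fun z => ‖f z‖) 0 1 := by
    refine (tsum_norm_sq_taylorCoeff_le hk).trans_eq (circleAverage_congr_sphere ?_)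
    rw [abs_one]
    exact hkf
  have hgf : ∀ z ∈ sphere (0 : ℂ) 1, ‖g z‖ ^ 2 = ‖f z‖ := fun z hz => by
    rw [(hgh z hz).1, norm_mul, ← (hgh z hz).2, pow_two]
  have hhf : ∀ z ∈ sphere (0 : ℂ) 1, ‖h z‖ ^ 2 = ‖f z‖ := fun z hz => by
    rw [← (hgh z hz).2, hgf z hz]
  calc ∑ k ∈ s, ‖taylorCoeff f k‖ ^ 2 / (k + 1)
      ≤ ∑ k ∈ s, ∑ p ∈ antidiagonal k, ‖taylorCoeff g p.1‖ ^ 2 * ‖taylorCoeff h p.2‖ ^ 2 := by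
        gcongr with k
        simpa only [taylorCoeff_eq, norm_mul, mul_pow] using norm_sum_antidiagonal_sq_div_le
          (fun p => taylorCoeff g p.1 * taylorCoeff h p.2) k
    _ ≤ (∑' k, ‖taylorCoeff g k‖ ^ 2) * ∑' k, ‖taylorCoeff h k‖ ^ 2 :=
        sum_sum_antidiagonal_mul_le_tsum_mul_tsum (summable_norm_sq_taylorCoeff hg)
          (summable_norm_sq_taylorCoeff hh) (fun _ => by positivity) (fun _ => by positivity) s
    _ ≤ circleAverage (fun z => ‖f z‖) 0 1 ^ 2 := by
        rw [pow_two]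
        exact mul_le_mul (tsum_le hg hgf) (tsum_le hh hhf) (by positivity)
          (circleAverage_nonneg_of_nonneg fun _ _ => norm_nonneg _)

section

variable {X Y 𝕜 κ ι : Type*} [MeasurableSpace X] [MeasurableSpace Y] [RCLike 𝕜]
  {μ : Measure X} {ν : Measure Y}

theorem sqrt_sum_sq_integral_norm_le {E : Type*} [NormedAddCommGroup E] (s : Finset κ)
    {f : κ → X → E} (hf : ∀ k ∈ s, Integrable (f k) μ) :
    √(∑ k ∈ s, (∫ x, ‖f k x‖ ∂μ) ^ 2) ≤ ∫ x, √(∑ k ∈ s, ‖f k x‖ ^ 2) ∂μ := by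
  let F (x : X) : EuclideanSpace ℝ s := WithLp.toLp 2 fun k => ‖f k x‖
  have hF (k : s) : ∫ x, ‖f k x‖ ∂μ = (∫ x, F x ∂μ) k :=
    (eval_integral_piLp (f := F) (fun k => (hf k k.2).norm) k).symm
  calc √(∑ k ∈ s, (∫ x, ‖f k x‖ ∂μ) ^ 2) = ‖∫ x, F x ∂μ‖ := by
        simp [EuclideanSpace.norm_eq, ← Finset.sum_coe_sort s, hF]
    _ ≤ ∫ x, ‖F x‖ ∂μ := norm_integral_le_integral_norm F
    _ = ∫ x, √(∑ k ∈ s, ‖f k x‖ ^ 2) ∂μ := by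
        congr with x
        simp [EuclideanSpace.norm_eq, F, Finset.sum_attach s fun k => ‖f k x‖ ^ 2]

theorem integral_norm_sq_sum_of_orthonormal [DecidableEq κ] {e : κ → X → 𝕜}
    (he : ∀ j k, Integrable (fun x => e j x * conj (e k x)) μ)
    (horth : ∀ j k, ∫ x, e j x * conj (e k x) ∂μ = if j = k then 1 else 0)
    (s : Finset κ) (a : κ → 𝕜) :
    ∫ x, ‖∑ k ∈ s, a k * e k x‖ ^ 2 ∂μ = ∑ k ∈ s, ‖a k‖ ^ 2 := by
  have expand (x : X) : (↑(‖∑ k ∈ s, a k * e k x‖ ^ 2) : 𝕜) =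
      ∑ j ∈ s, ∑ k ∈ s, a j * conj (a k) * (e j x * conj (e k x)) := by
    rw [RCLike.ofReal_pow, ← RCLike.mul_conj, map_sum, Finset.sum_mul_sum]
    simp only [map_mul, mul_mul_mul_comm]
  apply RCLike.ofReal_injective (K := 𝕜)
  calc (↑(∫ x, ‖∑ k ∈ s, a k * e k x‖ ^ 2 ∂μ) : 𝕜)
      = ∑ j ∈ s, ∑ k ∈ s, a j * conj (a k) * ∫ x, e j x * conj (e k x) ∂μ := by
        simp_rw [← integral_ofReal, expand]
        rw [integral_finsetSum _ fun j _ => integrable_finsetSum _ fun k _ => (he j k).const_mul _]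
        refine Finset.sum_congr rfl fun j _ => ?_
        rw [integral_finsetSum _ fun k _ => (he j k).const_mul _]
        simp_rw [integral_const_mul]
    _ = ↑(∑ k ∈ s, ‖a k‖ ^ 2) := by
        simp +contextual [horth, RCLike.mul_conj]

/-- A lower 2-estimate with constant `1` in `L¹(μ)`: finite linear combinations of the family `e`
have `L¹` norm at least the `ℓ²` norm of their coefficients. The estimate passes to tensor products
without loss because the constant is `1`, so weights are to be built into `e`. The integral is the
junk value `0` for a non-integrable combination. -/
def HasLowerTwoEstimate (μ : Measure X) (e : κ → X → 𝕜) : Prop :=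
  ∀ (s : Finset κ) (a : κ → 𝕜), √(∑ k ∈ s, ‖a k‖ ^ 2) ≤ ∫ x, ‖∑ k ∈ s, a k * e k x‖ ∂μ

namespace HasLowerTwoEstimate

theorem prod [SFinite μ] [SFinite ν] {e : κ → X → 𝕜} {f : ι → Y → 𝕜}
    (he : HasLowerTwoEstimate μ e) (hf : HasLowerTwoEstimate ν f)
    (he_int : ∀ k, Integrable (e k) μ) (hf_int : ∀ j, Integrable (f j) ν) :
    HasLowerTwoEstimate (μ.prod ν) fun (p : κ × ι) (z : X × Y) => e p.1 z.1 * f p.2 z.2 := by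
  classical
  intro s a
  let K : Finset κ := s.image Prod.fst
  let J (k : κ) : Finset ι := {p ∈ s | p.1 = k}.image Prod.snd
  have mem_s (p : κ × ι) : p ∈ s ↔ p.1 ∈ K ∧ p.2 ∈ J p.1 := by
    simp only [K, J, Finset.mem_image, Finset.mem_filter, Prod.exists]
    aesop
  let b (k : κ) (y : Y) : 𝕜 := ∑ j ∈ J k, a (k, j) * f j y
  have hb_int (k : κ) : Integrable (b k) ν :=
    integrable_finsetSum _ fun j _ => (hf_int j).const_mul _
  have sum_eq (x : X) (y : Y) :
      ∑ p ∈ s, a p * (e p.1 x * f p.2 y) = ∑ k ∈ K, b k y * e k x := by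
    rw [Finset.sum_finset_product s K J mem_s]
    refine Finset.sum_congr rfl fun k _ => ?_
    rw [Finset.sum_mul]
    exact Finset.sum_congr rfl fun j _ => by ring
  have norm_int : Integrable (fun z : X × Y => ‖∑ p ∈ s, a p * (e p.1 z.1 * f p.2 z.2)‖)
      (μ.prod ν) :=
    (integrable_finsetSum _ fun p _ =>
      ((he_int p.1).mul_prod (hf_int p.2)).const_mul (a p)).norm
  calc √(∑ p ∈ s, ‖a p‖ ^ 2)
      = √(∑ k ∈ K, ∑ j ∈ J k, ‖a (k, j)‖ ^ 2) := by
        rw [Finset.sum_finset_product s K J mem_s]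
    _ ≤ √(∑ k ∈ K, (∫ y, ‖b k y‖ ∂ν) ^ 2) := by
        gcongr with k
        exact (Real.sqrt_le_iff.mp (hf (J k) fun j => a (k, j))).2
    _ ≤ ∫ y, √(∑ k ∈ K, ‖b k y‖ ^ 2) ∂ν := sqrt_sum_sq_integral_norm_le K fun k _ => hb_int k
    _ ≤ ∫ y, ∫ x, ‖∑ k ∈ K, b k y * e k x‖ ∂μ ∂ν := by
        refine integral_mono_of_nonneg (.of_forall fun y => Real.sqrt_nonneg _) ?_
          (.of_forall fun y => he K fun k => b k y)
        simpa only [sum_eq] using norm_int.integral_prod_right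
    _ = ∫ z, ‖∑ p ∈ s, a p * (e p.1 z.1 * f p.2 z.2)‖ ∂(μ.prod ν) := by
        simp_rw [integral_prod_symm _ norm_int, sum_eq]

theorem comp_measurePreserving {e : κ → X → 𝕜} (he : HasLowerTwoEstimate μ e) (σ : ι ↪ κ)
    (T : Y ≃ᵐ X) (hT : MeasurePreserving T ν μ) :
    HasLowerTwoEstimate ν fun j y => e (σ j) (T y) := by
  intro s a
  have := he (s.map σ) (Function.extend σ a 0)
  simp only [Finset.sum_map, σ.injective.extend_apply] at this
  rwa [hT.integral_comp' (g := fun x => ‖∑ j ∈ s, a j * e (σ j) x‖)]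

theorem pi {n : ℕ} {X : Fin n → Type*} [∀ i, MeasurableSpace (X i)] {κ : Fin n → Type*}
    {μ : ∀ i, Measure (X i)} [∀ i, SigmaFinite (μ i)] {e : ∀ i, κ i → X i → 𝕜}
    (he : ∀ i, HasLowerTwoEstimate (μ i) (e i)) (he_int : ∀ i k, Integrable (e i k) (μ i)) :
    HasLowerTwoEstimate (Measure.pi μ) fun (α : ∀ i, κ i) x => ∏ i, e i (α i) (x i) := by
  induction n with
  | zero =>
    intro s a
    rcases s.eq_empty_or_nonempty with rfl | hs
    · simp
    · simp [hs.eq_univ, measureReal_def]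
  | succ n ih =>
    have head_tail := HasLowerTwoEstimate.prod (he 0)
      (ih (fun i => he i.succ) fun i => he_int i.succ) (he_int 0)
      fun α => .fintype_prod_dep fun i => he_int i.succ (α i)
    have := head_tail.comp_measurePreserving (Fin.consEquiv κ).symm.toEmbedding _
      (measurePreserving_piFinSuccAbove μ 0)
    simp only [Fin.prod_univ_succ]
    exact this

end HasLowerTwoEstimate

end

theorem integral_Ioc_comp_exp_eq_circleAverage {E : Type*} [NormedAddCommGroup E]
    [NormedSpace ℝ E] (f : ℂ → E) :
    ∫ t in Set.Ioc (0 : ℝ) 1, f (Complex.exp (2 * π * Complex.I * t)) = circleAverage f 0 1 := by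
  have circleMap_eq (t : ℝ) : Complex.exp (2 * π * Complex.I * t) = circleMap 0 1 (2 * π * t) := by
    rw [circleMap_zero, Complex.ofReal_one, one_mul]
    push_cast
    ring_nf
  simp_rw [circleMap_eq]
  rw [← intervalIntegral.integral_of_le zero_le_one,
    intervalIntegral.integral_comp_mul_left (fun t => f (circleMap 0 1 t)) two_pi_pos.ne',
    mul_zero, mul_one, circleAverage_def]

theorem hasLowerTwoEstimate_sqrt_mul_exp_pow :
    HasLowerTwoEstimate (volume.restrict (Set.Ioc (0 : ℝ) 1)) fun (k : ℕ) t =>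
      (√(k + 1) : ℂ) * Complex.exp (2 * π * Complex.I * t) ^ k := by
  intro s a
  let p : ℂ[X] := ∑ k ∈ s, Polynomial.monomial k (a k * (√(k + 1) : ℂ))
  have eval_p (z : ℂ) : p.eval z = ∑ k ∈ s, a k * ((√(k + 1) : ℂ) * z ^ k) := by
    simp [p, Polynomial.eval_finsetSum, mul_assoc]
  have norm_coeff_p {k : ℕ} (hk : k ∈ s) :
      ‖taylorCoeff (fun z => p.eval z) k‖ ^ 2 / (k + 1) = ‖a k‖ ^ 2 := by
    have coeff_p : p.coeff k = a k * (√(k + 1) : ℂ) := by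
      simp [p, Polynomial.coeff_monomial, hk]
    rw [taylorCoeff_polynomial_eval, coeff_p, norm_mul, mul_pow,
      Complex.norm_of_nonneg (by positivity), Real.sq_sqrt (by positivity),
      mul_div_cancel_right₀ _ (by positivity)]
  have average_p : circleAverage (fun z => ‖p.eval z‖) 0 1 =
      ∫ t in Set.Ioc (0 : ℝ) 1, ‖∑ k ∈ s, a k *
        ((√(k + 1) : ℂ) * Complex.exp (2 * π * Complex.I * t) ^ k)‖ := by
    simp_rw [← integral_Ioc_comp_exp_eq_circleAverage, eval_p]
  rw [← average_p, ← Finset.sum_congr rfl fun k hk => norm_coeff_p hk]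
  exact Real.sqrt_le_iff.mpr ⟨circleAverage_nonneg_of_nonneg fun _ _ => norm_nonneg _,
    sum_norm_sq_taylorCoeff_div_le_circleAverage_norm_sq p.differentiable.diffContOnCl
      (.polynomial_eval p) s⟩

theorem integral_Ioc_exp_pow_mul_conj_exp_pow (j k : ℕ) :
    ∫ t in Set.Ioc (0 : ℝ) 1, Complex.exp (2 * π * Complex.I * t) ^ j *
      conj (Complex.exp (2 * π * Complex.I * t) ^ k) = if j = k then 1 else 0 := by
  rw [integral_Ioc_comp_exp_eq_circleAverage fun z => z ^ j * conj (z ^ k)]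
  calc circleAverage (fun z => z ^ j * conj (z ^ k)) 0 1
      = circleAverage (fun z => z⁻¹ ^ k * (Polynomial.X ^ j : ℂ[X]).eval z) 0 1 := by
        refine circleAverage_congr_sphere fun z hz => ?_
        rw [abs_one, mem_sphere_zero_iff_norm] at hz
        simp [Complex.inv_eq_conj hz, mul_comm]
    _ = if j = k then 1 else 0 := by
        rw [circleAverage_inv_pow_mul_eq_taylorCoeff
            (Polynomial.differentiable _).diffContOnCl, taylorCoeff_polynomial_eval,
          Polynomial.coeff_X_pow]
        simp only [eq_comm]

theorem volume_restrict_univ_pi {ι : Type*} [Fintype ι] {X : ι → Type*}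
    [∀ i, MeasureSpace (X i)] [∀ i, SigmaFinite (volume : Measure (X i))] (s : ∀ i, Set (X i)) :
    (volume : Measure (∀ i, X i)).restrict (Set.univ.pi s) =
      Measure.pi fun i => volume.restrict (s i) := by
  rw [volume_pi, Measure.restrict_pi_pi]

theorem integral_norm_sq_sum_mul_prod_torusParam_pow {n : ℕ} (s : Finset (Fin n → ℕ))
    (a : (Fin n → ℕ) → ℂ) :
    ∫ θ in Set.univ.pi (fun _ : Fin n => Set.Ioc (0 : ℝ) 1),
      ‖∑ α ∈ s, a α * ∏ i, torusParam n θ i ^ α i‖ ^ 2 = ∑ α ∈ s, ‖a α‖ ^ 2 := by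
  have integrand (α β : Fin n → ℕ) (θ : Fin n → ℝ) :
      (∏ i, torusParam n θ i ^ α i) * conj (∏ i, torusParam n θ i ^ β i) =
        ∏ i, Complex.exp (2 * π * Complex.I * θ i) ^ α i *
          conj (Complex.exp (2 * π * Complex.I * θ i) ^ β i) := by
    rw [map_prod, ← Finset.prod_mul_distrib]
    rfl
  rw [volume_restrict_univ_pi]
  refine integral_norm_sq_sum_of_orthonormal (fun α β => ?_) (fun α β => ?_) s a
  · simp_rw [integrand]
    exact .fintype_prod (f := fun i (t : ℝ) => Complex.exp (2 * π * Complex.I * t) ^ α i *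
      conj (Complex.exp (2 * π * Complex.I * t) ^ β i))
      fun i => Continuous.integrableOn_Ioc (by fun_prop)
  · simp_rw [integrand]
    rw [integral_fintype_prod_eq_prod (𝕜 := ℂ) fun i (t : ℝ) =>
      Complex.exp (2 * π * Complex.I * t) ^ α i *
        conj (Complex.exp (2 * π * Complex.I * t) ^ β i)]
    simp only [integral_Ioc_exp_pow_mul_conj_exp_pow, Finset.prod_ite_zero, Finset.prod_const_one,
      Finset.mem_univ, forall_const, funext_iff]

theorem prod_sqrt_add_one_le_sqrt_two_pow {ι : Type*} (t : Finset ι) (α : ι → ℕ) :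
    ∏ i ∈ t, √(α i + 1) ≤ √2 ^ ∑ i ∈ t, α i := by
  rw [← Finset.prod_pow_eq_pow_sum]
  gcongr with i
  refine Real.sqrt_le_iff.mpr ⟨by positivity, ?_⟩
  rw [← pow_mul, mul_comm, pow_mul, Real.sq_sqrt zero_le_two]
  exact_mod_cast (α i).lt_two_pow_self

theorem sqrt_sum_norm_div_sq_le_integral_norm_torusParam {n : ℕ} (s : Finset (Fin n → ℕ))
    (a : (Fin n → ℕ) → ℂ) :
    √(∑ α ∈ s, (‖a α‖ / ∏ i, √(α i + 1)) ^ 2) ≤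
      ∫ θ in Set.univ.pi (fun _ : Fin n => Set.Ioc (0 : ℝ) 1),
        ‖∑ α ∈ s, a α * ∏ i, torusParam n θ i ^ α i‖ := by
  have lower := HasLowerTwoEstimate.pi (n := n) (fun _ => hasLowerTwoEstimate_sqrt_mul_exp_pow)
    fun _ k => Continuous.integrableOn_Ioc (by fun_prop)
  have norm_coeff (α : Fin n → ℕ) :
      ‖a α / ∏ i, (√(α i + 1) : ℂ)‖ = ‖a α‖ / ∏ i, √(α i + 1) := by
    simp [norm_prod, abs_of_nonneg]
  have term_eq (α : Fin n → ℕ) (θ : Fin n → ℝ) :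
      (a α / ∏ i, (√(α i + 1) : ℂ)) *
        ∏ i, (√(α i + 1) : ℂ) * Complex.exp (2 * π * Complex.I * θ i) ^ α i =
      a α * ∏ i, torusParam n θ i ^ α i := by
    have prod_ne_zero : ∏ i, (√(α i + 1) : ℂ) ≠ 0 :=
      Finset.prod_ne_zero_iff.mpr fun i _ =>
        Complex.ofReal_ne_zero.mpr (Real.sqrt_ne_zero'.mpr (by positivity))
    rw [Finset.prod_mul_distrib, ← mul_assoc, div_mul_cancel₀ _ prod_ne_zero]
    rfl
  simpa only [norm_coeff, term_eq, volume_restrict_univ_pi] using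
    lower s fun α => a α / ∏ i, (√(α i + 1) : ℂ)

theorem l1_l2_hypercontractivity_general (m n : ℕ) (s : Finset (Fin n → ℕ))
    (hs : ∀ α ∈ s, ∑ i, α i ≤ m) (a : (Fin n → ℕ) → ℂ) :
    √(∑ α ∈ s, ‖a α‖ ^ 2) = √(∫ θ in Set.univ.pi (fun _ : Fin n => Set.Ioc (0 : ℝ) 1),
        ‖∑ α ∈ s, a α * ∏ i, torusParam n θ i ^ α i‖ ^ 2) ∧
      √(∫ θ in Set.univ.pi (fun _ : Fin n => Set.Ioc (0 : ℝ) 1),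
          ‖∑ α ∈ s, a α * ∏ i, torusParam n θ i ^ α i‖ ^ 2) ≤
        √2 ^ m * ∫ θ in Set.univ.pi (fun _ : Fin n => Set.Ioc (0 : ℝ) 1),
          ‖∑ α ∈ s, a α * ∏ i, torusParam n θ i ^ α i‖ := by
  rw [integral_norm_sq_sum_mul_prod_torusParam_pow]
  refine ⟨rfl, ?_⟩
  calc √(∑ α ∈ s, ‖a α‖ ^ 2)
      ≤ √(∑ α ∈ s, (√2 ^ m * (‖a α‖ / ∏ i, √(α i + 1))) ^ 2) := by
        gcongr with α hα
        rw [mul_div_left_comm]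
        refine le_mul_of_one_le_right (norm_nonneg _) ((one_le_div (by positivity)).mpr ?_)
        exact (prod_sqrt_add_one_le_sqrt_two_pow univ α).trans <|
          pow_le_pow_right₀ (Real.one_le_sqrt.mpr one_le_two) (hs α hα)
    _ = √2 ^ m * √(∑ α ∈ s, (‖a α‖ / ∏ i, √(α i + 1)) ^ 2) := by
        simp_rw [mul_pow (√2 ^ m), ← Finset.mul_sum]
        rw [Real.sqrt_mul (by positivity), Real.sqrt_sq (by positivity)]
    _ ≤ _ := by gcongr; exact sqrt_sum_norm_div_sq_le_integral_norm_torusParam s a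

/-- Hypercontractive `L¹`–`L²` inequality for `m`-homogeneous polynomials on the
`n`-torus: `(∑_α |a_α|²)^{1/2} = ‖P‖_{L²(μⁿ)} ≤ √2^m · ‖P‖_{L¹(μⁿ)}`. -/
theorem l1_l2_hypercontractivity (m n : ℕ) (hm : 0 < m) (hn : 0 < n)
    (a : (Fin n → ℕ) → ℂ) :
    Real.sqrt (∑ α ∈ Finset.Nat.antidiagonalTuple n m, ‖a α‖ ^ 2)
        = Real.sqrt (∫ θ in Set.univ.pi (fun _ : Fin n => Set.Ioc (0 : ℝ) 1),
            ‖mhEval n m a (torusParam n θ)‖ ^ 2)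
      ∧ Real.sqrt (∫ θ in Set.univ.pi (fun _ : Fin n => Set.Ioc (0 : ℝ) 1),
            ‖mhEval n m a (torusParam n θ)‖ ^ 2)
          ≤ Real.sqrt 2 ^ m *
            ∫ θ in Set.univ.pi (fun _ : Fin n => Set.Ioc (0 : ℝ) 1),
              ‖mhEval n m a (torusParam n θ)‖ :=
  l1_l2_hypercontractivity_general m n (Finset.Nat.antidiagonalTuple n m)
    (fun _ hα => (Finset.Nat.mem_antidiagonalTuple.mp hα).le) a
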